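/- arXiv:1607.05930 — 4 statements merged into one kernel-verified Lean document; each statement's English description precedes it below -/
import Mathlib

section
/- Let G be a graph on n vertices such that both G and its complement Ḡ are connected. Then pc_{1,2}(G) + pc_{1,2}(Ḡ) ≤ n + 2. -/
open SimpleGraph

/-- A walk is *distance `ℓ`-proper* with respect to an edge-coloring `c` if any two
edges whose positions along the walk differ by at most `ℓ` receive distinct colors
(equivalently, no two edges of the same color appear with fewer than `ℓ` edges in
between on the walk). -/
def SimpleGraph.Walk.IsDistProper {V : Type*} {G : SimpleGraph V} {u v : V}
    (ℓ : ℕ) (c : Sym2 V → ℕ) (p : G.Walk u v) : Prop :=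
  ∀ (i j : ℕ) (hi : i < p.edges.length) (hj : j < p.edges.length),
    i < j → j ≤ i + ℓ → c (p.edges[i]'hi) ≠ c (p.edges[j]'hj)

/-- `c` is a `(1,ℓ)`-proper-path coloring of `G` using at most `k` colors
(the colors of edges of `G` lie in `{0, …, k-1}`): every pair of distinct vertices
is joined by a distance `ℓ`-proper path. -/
def SimpleGraph.IsPCColoring {V : Type*} (G : SimpleGraph V) (ℓ k : ℕ)
    (c : Sym2 V → ℕ) : Prop :=
  (∀ e ∈ G.edgeSet, c e < k) ∧
  ∀ u v : V, u ≠ v → ∃ p : G.Walk u v, p.IsPath ∧ p.IsDistProper ℓ c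

/-- The `(1,ℓ)`-proper connection number `pc_{1,ℓ}(G)`: the minimum number of colors
in an edge-coloring of `G` such that every pair of distinct vertices is connected by
a distance `ℓ`-proper path. -/
noncomputable def SimpleGraph.pc {V : Type*} (G : SimpleGraph V) (ℓ : ℕ) : ℕ :=
  sInf {k | ∃ c : Sym2 V → ℕ, G.IsPCColoring ℓ k c}


def PCCore {V : Type*} (H : SimpleGraph V) (S : Finset V) (k : ℕ) : Prop :=
  ∃ c : Sym2 V → ℕ, (∀ e ∈ H.edgeSet, (∀ x ∈ e, x ∈ S) → c e < k) ∧
    ∀ u ∈ S, ∀ v ∈ S, ∃ p : H.Walk u v, p.IsPath ∧ p.IsDistProper 2 c ∧ ∀ x ∈ p.support, x ∈ S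

def PathList {V : Type*} (H : SimpleGraph V) (l : List V) : Prop :=
  l.Nodup ∧ l.IsChain H.Adj

theorem isDistProper_reverse {V : Type*} {H : SimpleGraph V} {u v : V} {c : Sym2 V → ℕ}
    {p : H.Walk u v} (h : p.IsDistProper 2 c) : p.reverse.IsDistProper 2 c := by
  intro i j hi hj hij hij2
  simp only [SimpleGraph.Walk.edges_reverse, List.length_reverse] at hi hj
  simp only [SimpleGraph.Walk.edges_reverse, List.getElem_reverse]
  exact (h _ _ (by omega) (by omega) (by omega) (by omega)).symm

theorem exists_boundary {V : Type*} {H : SimpleGraph V} (hH : H.Connected) (S : Set V)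
    {a b : V} (ha : a ∈ S) (hb : b ∉ S) : ∃ w ∈ S, ∃ v ∉ S, H.Adj w v := by
  obtain ⟨p⟩ := hH.preconnected a b
  obtain ⟨d, _, h1, h2⟩ := p.exists_boundary_dart S ha hb
  exact ⟨d.fst, h1, d.snd, h2, d.adj⟩

theorem PCCore.extend {V : Type*} {H : SimpleGraph V} [DecidableEq V] {S : Finset V} {k : ℕ}
    (h : PCCore H S k) {w v : V} (hw : w ∈ S) (hv : v ∉ S) (hwv : H.Adj w v) :
    PCCore H (insert v S) (k + 1) := by
  classical
  obtain ⟨c, hc, hp⟩ := h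
  set c' : Sym2 V → ℕ := fun e => if v ∈ e then k else c e with hc'
  have key : ∀ {u x : V} (p : H.Walk u x), (∀ y ∈ p.support, y ∈ S) →
      ∀ e ∈ p.edges, c' e = c e ∧ c e < k := by
    intro u x p hs e he
    have hin : ∀ y ∈ e, y ∈ S := fun y hy => hs y (p.mem_support_of_mem_edges he hy)
    refine ⟨?_, hc e (p.edges_subset_edgeSet he) hin⟩
    simp only [hc']
    rw [if_neg]
    exact fun hve => hv (hin v hve)
  have old : ∀ {u x : V} (p : H.Walk u x), (∀ y ∈ p.support, y ∈ S) → p.IsDistProper 2 c →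
      p.IsDistProper 2 c' := by
    intro u x p hs hd i j hi hj hij hij2
    rw [(key p hs _ (List.getElem_mem hi)).1, (key p hs _ (List.getElem_mem hj)).1]
    exact hd i j hi hj hij hij2
  have new : ∀ x ∈ S, ∃ p : H.Walk v x, p.IsPath ∧ p.IsDistProper 2 c' ∧
      ∀ y ∈ p.support, y ∈ insert v S := by
    intro x hx
    obtain ⟨p, h1, h2, h3⟩ := hp w hw x hx
    refine ⟨SimpleGraph.Walk.cons hwv.symm p, ?_, ?_, ?_⟩
    · rw [SimpleGraph.Walk.cons_isPath_iff]
      exact ⟨h1, fun hh => hv (h3 _ hh)⟩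
    · intro i j hi hj hij hij2
      rcases j with _ | j
      · omega
      rcases i with _ | i
      · simp only [SimpleGraph.Walk.edges_cons, List.getElem_cons_zero, List.getElem_cons_succ]
        have hj' : j < p.edges.length := by simpa using hj
        have := key p h3 _ (List.getElem_mem hj')
        have h0 : c' s(v, w) = k := by simp [hc']
        omega
      · simp only [SimpleGraph.Walk.edges_cons, List.getElem_cons_succ]
        exact old p h3 h2 i j (by simpa using hi) (by simpa using hj) (by omega) (by omega)
    · intro y hy
      simp only [SimpleGraph.Walk.support_cons, List.mem_cons] at hy
      rcases hy with rfl | hy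
      · simp
      · exact Finset.mem_insert_of_mem (h3 y hy)
  refine ⟨c', ?_, ?_⟩
  · intro e he hin
    by_cases hve : v ∈ e
    · simp [hc', hve]
    · have : c e < k := hc e he (fun x hx => by
        rcases Finset.mem_insert.1 (hin x hx) with rfl | h
        · exact absurd hx hve
        · exact h)
      simp only [hc', if_neg hve]; omega
  · intro a ha b hb
    rcases Finset.mem_insert.1 ha with rfl | ha'
    · rcases Finset.mem_insert.1 hb with rfl | hb
      · refine ⟨SimpleGraph.Walk.nil, by simp, ?_, by simp⟩
        intro i j hi; simp at hi
      · exact new b hb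
    · rcases Finset.mem_insert.1 hb with rfl | hb
      · obtain ⟨p, h1, h2, h3⟩ := new a ha'
        exact ⟨p.reverse, h1.reverse, isDistProper_reverse h2, by simpa using h3⟩
      · obtain ⟨p, h1, h2, h3⟩ := hp a ha' b hb
        exact ⟨p, h1, old p h3 h2, fun y hy => Finset.mem_insert_of_mem (h3 y hy)⟩

theorem PCCore.pc_le {V : Type*} [Fintype V] {H : SimpleGraph V} (hH : H.Connected) :
    ∀ (d : ℕ) (S : Finset V) (k : ℕ), PCCore H S k → S.Nonempty → S.card + d = Fintype.card V →
      H.pc 2 ≤ k + d := by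
  classical
  intro d
  induction d with
  | zero =>
    intro S k h _ hcard
    have hS : S = Finset.univ := (Finset.card_eq_iff_eq_univ S).1 (by simpa using hcard)
    subst hS
    obtain ⟨c, hc, hp⟩ := h
    apply Nat.sInf_le
    refine ⟨c, fun e he => hc e he (by simp), fun u v _ => ?_⟩
    obtain ⟨p, h1, h2, _⟩ := hp u (by simp) v (by simp)
    exact ⟨p, h1, h2⟩
  | succ d ih =>
    intro S k h hne hcard
    obtain ⟨a, ha⟩ := hne
    have : ∃ b, b ∉ S := by
      by_contra hcon
      push Not at hcon
      have : S = Finset.univ := Finset.eq_univ_iff_forall.2 hcon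
      rw [this, Finset.card_univ] at hcard
      omega
    obtain ⟨b, hb⟩ := this
    obtain ⟨w, hw, v, hv, hwv⟩ := exists_boundary hH (S : Set V) (by exact_mod_cast ha)
      (by exact_mod_cast hb)
    have := ih (insert v S) (k+1) (h.extend (by exact_mod_cast hw) (by exact_mod_cast hv) hwv)
      (by simp) (by rw [Finset.card_insert_of_notMem (by exact_mod_cast hv)]; omega)
    omega

theorem PathList.core {V : Type*} {H : SimpleGraph V} [DecidableEq V] {l : List V}
    (h : PathList H l) : PCCore H l.toFinset 3 := by
  obtain ⟨hn, hch⟩ := h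
  set c : Sym2 V → ℕ := Sym2.lift ⟨fun a b => min (l.idxOf a) (l.idxOf b) % 3,
    fun a b => congrArg (· % 3) (min_comm _ _)⟩ with hc
  have main : ∀ (d i : ℕ) (h : i + d < l.length), ∃ p : H.Walk l[i] l[i+d], p.IsPath ∧
      (∀ k (hk : k < p.edges.length), c p.edges[k] = (i + k) % 3) ∧
      (∀ x ∈ p.support, x ∈ l ∧ i ≤ l.idxOf x) := by
    intro d
    induction d with
    | zero =>
      intro i h
      refine ⟨SimpleGraph.Walk.nil, by simp, by simp, ?_⟩
      intro x hx
      simp only [SimpleGraph.Walk.support_nil, List.mem_singleton] at hx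
      subst hx
      exact ⟨by simp, by rw [hn.idxOf_getElem]⟩
    | succ d ih =>
      intro i h
      obtain ⟨p, h1, h2, h3⟩ := ih (i+1) (by omega)
      have hadj : H.Adj l[i] l[i+1] := List.isChain_iff_getElem.1 hch i (by omega)
      have heq : l[i + 1 + d]'(by omega) = l[i + (d + 1)]'h := by congr 1; omega
      refine ⟨(SimpleGraph.Walk.cons hadj p).copy rfl heq, ?_, ?_, ?_⟩
      · rw [SimpleGraph.Walk.isPath_copy, SimpleGraph.Walk.cons_isPath_iff]
        refine ⟨h1, fun hh => ?_⟩
        have := (h3 _ hh).2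
        rw [hn.idxOf_getElem] at this
        omega
      · intro k hk
        rcases k with _ | k
        · simp only [SimpleGraph.Walk.edges_copy, SimpleGraph.Walk.edges_cons,
            List.getElem_cons_zero, hc, Sym2.lift_mk]
          rw [hn.idxOf_getElem, hn.idxOf_getElem]
          simp
        · simp only [SimpleGraph.Walk.edges_copy, SimpleGraph.Walk.edges_cons,
            List.getElem_cons_succ]
          rw [h2]
          congr 1
          omega
      · intro x hx
        simp only [SimpleGraph.Walk.support_copy, SimpleGraph.Walk.support_cons,
          List.mem_cons] at hx
        rcases hx with rfl | hx
        · exact ⟨by simp, by rw [hn.idxOf_getElem]⟩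
        · exact ⟨(h3 x hx).1, by have := (h3 x hx).2; omega⟩
  have main2 : ∀ (i j : ℕ) (hij : i ≤ j) (hj : j < l.length), ∃ p : H.Walk l[i] l[j],
      p.IsPath ∧ p.IsDistProper 2 c ∧ ∀ x ∈ p.support, x ∈ l.toFinset := by
    intro i j hij hj
    obtain ⟨d, rfl⟩ := Nat.exists_eq_add_of_le hij
    obtain ⟨p, h1, h2, h3⟩ := main d i hj
    refine ⟨p, h1, ?_, fun x hx => List.mem_toFinset.2 (h3 x hx).1⟩
    intro a b ha hb hab hab2
    rw [h2, h2]
    omega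
  refine ⟨c, ?_, ?_⟩
  · intro e _ _
    induction e using Sym2.ind with
    | _ a b => simp only [hc, Sym2.lift_mk]; omega
  · intro u hu v hv
    rw [List.mem_toFinset] at hu hv
    obtain ⟨i, hi, rfl⟩ := List.getElem_of_mem hu
    obtain ⟨j, hj, rfl⟩ := List.getElem_of_mem hv
    rcases le_total i j with hij | hij
    · exact main2 i j hij hj
    · obtain ⟨p, h1, h2, h3⟩ := main2 j i hij hi
      exact ⟨p.reverse, h1.reverse, isDistProper_reverse h2, by simpa using h3⟩

theorem PathList.length_le {V : Type*} [Fintype V] {H : SimpleGraph V} {l : List V}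
    (h : PathList H l) : l.length ≤ Fintype.card V := h.1.length_le_card

theorem PathList.pc_le {V : Type*} [Fintype V] {H : SimpleGraph V} (hH : H.Connected) {l : List V}
    (h : PathList H l) (hl : l ≠ []) : H.pc 2 + l.length ≤ 3 + Fintype.card V := by
  classical
  have := h.length_le
  have := PCCore.pc_le hH (Fintype.card V - l.length) l.toFinset 3 h.core
    (by simpa using hl)
    (by rw [List.toFinset_card_of_nodup h.1]; omega)
  omega

theorem pc_le_sub_one {V : Type*} [Fintype V] {H : SimpleGraph V} (hH : H.Connected) :
    H.pc 2 + 1 ≤ Fintype.card V := by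
  classical
  obtain ⟨v⟩ := hH.nonempty
  have hpos : 0 < Fintype.card V := Fintype.card_pos_iff.2 ⟨v⟩
  have hcore : PCCore H {v} 0 := by
    refine ⟨fun _ => 0, ?_, ?_⟩
    · intro e he hin
      exfalso
      induction e using Sym2.ind with
      | _ a b =>
        have h1 := hin a (by simp)
        have h2 := hin b (by simp)
        simp only [Finset.mem_singleton] at h1 h2
        subst h1; subst h2
        simp at he
    · intro a ha b hb
      simp only [Finset.mem_singleton] at ha hb
      subst ha; subst hb
      refine ⟨SimpleGraph.Walk.nil, by simp, ?_, by simp⟩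
      intro i j hi; simp at hi
  have := PCCore.pc_le hH (Fintype.card V - 1) {v} 0 hcore (by simp) (by simp; omega)
  omega

theorem PathList.cons {V : Type*} {H : SimpleGraph V} {a b : V} {l : List V}
    (h : PathList H (b :: l)) (hab : H.Adj a b) (ha : a ∉ b :: l) : PathList H (a :: b :: l) :=
  ⟨List.nodup_cons.2 ⟨ha, h.1⟩, List.isChain_cons_cons.2 ⟨hab, h.2⟩⟩

theorem zig_fallback {V : Type*} [DecidableEq V] {H : SimpleGraph V} (X : Finset V) (idx : V → ℕ)
    (z : ℕ → V) :
    ∀ (T : Finset ℕ) (U : Finset V) (w : V), w ∈ X → idx w ∉ T → (∀ j ∈ T, z j ∈ X ∧ idx (z j) = j) →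
      (∀ u ∈ U, u ∉ X) → T.card ≤ U.card → (∀ u ∈ U, H.Adj u w) →
      (∀ u ∈ U, ∀ j ∈ T, H.Adj u (z j)) →
      ∃ l, PathList H (w :: l) ∧ l.length = 2 * T.card ∧
        ∀ x ∈ l, x ∈ U ∨ (x ∈ X ∧ idx x ∈ T) := by
  intro T
  induction T using Finset.induction_on with
  | empty =>
    intro U w _ _ _ _ _ _ _
    exact ⟨[], ⟨by simp, by simp⟩, by simp, by simp⟩
  | insert j T hj ih =>
    intro U w hw hwT hz hU hcard hUw hUz
    rw [Finset.card_insert_of_notMem hj] at hcard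
    obtain ⟨u, hu⟩ : U.Nonempty := Finset.card_pos.1 (by omega)
    obtain ⟨hzX, hzi⟩ := hz j (by simp)
    obtain ⟨l, h1, h2, h3⟩ := ih (U.erase u) (z j) hzX (by rwa [hzi])
      (fun i hi => hz i (by simp [hi])) (fun v hv => hU v (Finset.mem_of_mem_erase hv))
      (by rw [Finset.card_erase_of_mem hu]; omega)
      (fun v hv => hUz v (Finset.mem_of_mem_erase hv) j (by simp))
      (fun v hv i hi => hUz v (Finset.mem_of_mem_erase hv) i (by simp [hi]))
    refine ⟨u :: z j :: l, ?_, ?_, ?_⟩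
    · refine PathList.cons (PathList.cons h1 (hUz u hu j (by simp)) ?_) (hUw u hu).symm ?_
      · intro hmem
        rcases List.mem_cons.1 hmem with h | h
        · exact hU u hu (h ▸ hzX)
        · rcases h3 u h with h | h
          · simp at h
          · exact hU u hu h.1
      · intro hmem
        simp only [List.mem_cons] at hmem
        rcases hmem with h | h | h
        · exact hU u hu (h ▸ hw)
        · exact hwT (by rw [h, hzi]; simp)
        · rcases h3 w h with h | h
          · exact hU w (Finset.mem_of_mem_erase h) hw
          · exact hwT (by simp [h.2])
    · rw [Finset.card_insert_of_notMem hj]; simp [h2]; omega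
    · intro x hx
      simp only [List.mem_cons] at hx
      rcases hx with rfl | rfl | hx
      · exact Or.inl hu
      · exact Or.inr ⟨hzX, by simp [hzi]⟩
      · rcases h3 x hx with h | h
        · exact Or.inl (Finset.mem_of_mem_erase h)
        · exact Or.inr ⟨h.1, by simp [h.2]⟩

theorem zig {V : Type*} [DecidableEq V] {H : SimpleGraph V} (X : Finset V) (idx : V → ℕ)
    (a b : ℕ → V) (w : V) (hw : w ∈ X) (hwadj : ∀ u ∉ X, H.Adj u w) :
    ∀ (t : ℕ) (T : Finset ℕ) (U : Finset V) (r : V), T.card = t → idx w ∉ T →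
      (∀ j ∈ T, a j ∈ X ∧ b j ∈ X ∧ idx (a j) = j ∧ idx (b j) = j) →
      (∀ j ∈ T, ∀ u ∉ X, H.Adj u (a j) ∨ H.Adj u (b j)) →
      (∀ u ∈ U, u ∉ X) → r ∉ X → r ∉ U → t ≤ U.card →
      ∃ l, PathList H (r :: l) ∧ l.length = 2 * t + 1 ∧
        ∀ x ∈ l, x ∈ U ∨ x = w ∨ (x ∈ X ∧ idx x ∈ T) := by
  classical
  intro t
  induction t with
  | zero =>
    intro T U r hT hwT hab hadj hU hr hrU hcard
    refine ⟨[w], PathList.cons ⟨by simp, by simp⟩ (hwadj r hr) ?_, by simp, by simp⟩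
    intro h
    rw [List.mem_singleton] at h
    exact hr (h ▸ hw)
  | succ t ih =>
    intro T U r hT hwT hab hadj hU hr hrU hcard
    by_cases hprog : ∃ j ∈ T, ∃ y, (y = a j ∨ y = b j) ∧ H.Adj r y ∧ ∃ u ∈ U, H.Adj y u
    · obtain ⟨j, hj, y, hy, hry, u, hu, hyu⟩ := hprog
      have hyX : y ∈ X ∧ idx y = j := by
        obtain ⟨h1, h2, h3, h4⟩ := hab j hj
        rcases hy with rfl | rfl
        · exact ⟨h1, h3⟩
        · exact ⟨h2, h4⟩
      obtain ⟨l, h1, h2, h3⟩ := ih (T.erase j) (U.erase u) u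
        (by rw [Finset.card_erase_of_mem hj]; omega)
        (fun h => hwT (Finset.mem_of_mem_erase h))
        (fun i hi => hab i (Finset.mem_of_mem_erase hi))
        (fun i hi => hadj i (Finset.mem_of_mem_erase hi))
        (fun v hv => hU v (Finset.mem_of_mem_erase hv)) (hU u hu) (by simp)
        (by rw [Finset.card_erase_of_mem hu]; omega)
      refine ⟨y :: u :: l, PathList.cons (PathList.cons h1 hyu ?_) hry ?_, ?_, ?_⟩
      · intro hmem
        rcases List.mem_cons.1 hmem with h | h
        · exact hU u hu (h ▸ hyX.1)
        · rcases h3 y h with h | h | h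
          · exact hU y (Finset.mem_of_mem_erase h) hyX.1
          · exact hwT (by rw [← h, hyX.2]; exact hj)
          · rw [hyX.2] at h; simp at h
      · intro hmem
        simp only [List.mem_cons] at hmem
        rcases hmem with h | h | h
        · exact hr (h ▸ hyX.1)
        · exact hrU (h ▸ hu)
        · rcases h3 r h with h | h | h
          · exact hrU (Finset.mem_of_mem_erase h)
          · exact hr (h ▸ hw)
          · exact hr h.1
      · simp [h2]; omega
      · intro x hx
        simp only [List.mem_cons] at hx
        rcases hx with rfl | rfl | hx
        · exact Or.inr (Or.inr ⟨hyX.1, by rw [hyX.2]; exact hj⟩)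
        · exact Or.inl hu
        · rcases h3 x hx with h | h | h
          · exact Or.inl (Finset.mem_of_mem_erase h)
          · exact Or.inr (Or.inl h)
          · exact Or.inr (Or.inr ⟨h.1, Finset.mem_of_mem_erase h.2⟩)
    · have hno : ∀ j ∈ T, ∀ y, (y = a j ∨ y = b j) → H.Adj r y → ∀ u ∈ U, ¬ H.Adj y u := by
        intro j hj y hy hry u hu hyu
        exact hprog ⟨j, hj, y, hy, hry, u, hu, hyu⟩
      have hz : ∀ j, ∃ y, j ∈ T → (y = a j ∨ y = b j) ∧ ∀ u ∈ U, H.Adj u y := by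
        intro j
        by_cases hj : j ∈ T
        · rcases hadj j hj r hr with h | h
          · refine ⟨b j, fun _ => ⟨Or.inr rfl, fun u hu => ?_⟩⟩
            exact (hadj j hj u (hU u hu)).resolve_left
              (fun h' => hno j hj _ (Or.inl rfl) h u hu h'.symm)
          · refine ⟨a j, fun _ => ⟨Or.inl rfl, fun u hu => ?_⟩⟩
            exact (hadj j hj u (hU u hu)).resolve_right
              (fun h' => hno j hj _ (Or.inr rfl) h u hu h'.symm)
        · exact ⟨w, fun h => absurd h hj⟩
      choose z hz using hz
      obtain ⟨l, h1, h2, h3⟩ := zig_fallback (H := H) X idx z T U w hw hwT (by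
          intro j hj
          obtain ⟨g1, g2, g3, g4⟩ := hab j hj
          rcases (hz j hj).1 with h | h
          · rw [h]; exact ⟨g1, g3⟩
          · rw [h]; exact ⟨g2, g4⟩) hU (by omega) (fun u hu => hwadj u (hU u hu))
        (fun u hu j hj => (hz j hj).2 u hu)
      refine ⟨w :: l, PathList.cons h1 (hwadj r hr) ?_, by simp [h2, hT], ?_⟩
      · intro hmem
        rcases List.mem_cons.1 hmem with h | h
        · exact hr (h ▸ hw)
        · rcases h3 r h with h | h
          · exact hrU h
          · exact hr h.1
      · intro x hx
        rcases List.mem_cons.1 hx with h | h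
        · exact Or.inr (Or.inl h)
        · rcases h3 x h with h | h
          · exact Or.inl h
          · exact Or.inr (Or.inr h)

theorem longest_not_adj_head {V : Type*} {G : SimpleGraph V} {l : List V} (hl : PathList G l)
    (hmax : ∀ l', PathList G l' → l'.length ≤ l.length) {r : V} (hr : r ∉ l) {x : V}
    (hx : x ∈ l.head?) : ¬ G.Adj r x := by
  intro h
  rcases l with _ | ⟨y, l⟩
  · simp at hx
  · simp at hx
    subst hx
    have := hmax _ (PathList.cons hl h hr)
    simp at this

theorem PathList.reverse {V : Type*} {G : SimpleGraph V} {l : List V} (hl : PathList G l) :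
    PathList G l.reverse :=
  ⟨List.nodup_reverse.2 hl.1, List.isChain_reverse.2 (hl.2.imp fun _ _ h => h.symm)⟩

theorem longest_not_adj_last {V : Type*} {G : SimpleGraph V} {l : List V} (hl : PathList G l)
    (hmax : ∀ l', PathList G l' → l'.length ≤ l.length) {r : V} (hr : r ∉ l) {x : V}
    (hx : x ∈ l.getLast?) : ¬ G.Adj r x :=
  longest_not_adj_head hl.reverse (by simpa using hmax) (by simpa using hr) (by simpa using hx)

theorem longest_not_adj_consec {V : Type*} {G : SimpleGraph V} {l : List V} (hl : PathList G l)
    (hmax : ∀ l', PathList G l' → l'.length ≤ l.length) {r : V} (hr : r ∉ l) {i : ℕ}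
    (hi : i + 1 < l.length) : ¬ (G.Adj r l[i] ∧ G.Adj r l[i+1]) := by
  rintro ⟨h1, h2⟩
  have hsplit : l = l.take (i+1) ++ l.drop (i+1) := by simp
  have hp : PathList G (l.take (i+1) ++ r :: l.drop (i+1)) := by
    constructor
    · have : (r :: l).Nodup := List.nodup_cons.2 ⟨hr, hl.1⟩
      refine (List.Perm.nodup_iff ?_).1 this
      conv_lhs => rw [hsplit]
      exact List.perm_middle.symm
    · rw [List.isChain_append]
      refine ⟨hl.2.take _, ?_, ?_⟩
      · rw [List.isChain_cons]
        refine ⟨?_, hl.2.drop _⟩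
        intro y hy
        simp [hi] at hy
        exact hy ▸ h2
      · intro x hx y hy
        simp [List.getLast?_take, List.getElem?_eq_getElem (show i < l.length by omega)] at hx hy
        subst hx; subst hy
        exact h1.symm
  have := hmax _ hp
  simp at this
  omega

theorem cycle_extend {V : Type*} {H : SimpleGraph V} (hH : H.Connected) {c : List V}
    (hc : PathList H c) (hclose : ∀ x ∈ c.getLast?, ∀ y ∈ c.head?, H.Adj x y) (hne : c ≠ [])
    {b : V} (hb : b ∉ c) : ∃ l, PathList H l ∧ l.length = c.length + 1 := by
  obtain ⟨a, ha⟩ := List.exists_mem_of_ne_nil c hne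
  obtain ⟨w, hw, v, hv, hwv⟩ := exists_boundary hH {x | x ∈ c} ha hb
  change w ∈ c at hw
  change ¬ (v ∈ c) at hv
  obtain ⟨s, t, rfl⟩ := List.append_of_mem hw
  refine ⟨v :: w :: (t ++ s), ?_, by simp; omega⟩
  have hperm : ((w :: t) ++ s).Perm (s ++ w :: t) := List.perm_append_comm
  refine PathList.cons (b := w) (l := t ++ s) ⟨hperm.nodup_iff.2 hc.1, ?_⟩ hwv.symm ?_
  · have h := List.isChain_append.1 hc.2
    change List.IsChain H.Adj ((w :: t) ++ s)
    rw [List.isChain_append]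
    refine ⟨h.2.1, h.1, ?_⟩
    intro x hx y hy
    apply hclose
    · exact List.mem_getLast?_append_of_mem_getLast? hx
    · cases s with
      | nil => simp at hy
      | cons => simpa using hy
  · intro h
    exact hv (hperm.mem_iff.1 h)

theorem compl_adj_of {V : Type*} {G : SimpleGraph V} {a b : V} (h : a ≠ b) (h' : ¬ G.Adj a b) :
    Gᶜ.Adj a b := by
  rw [SimpleGraph.compl_adj]; exact ⟨h, h'⟩

theorem big_zig {V : Type*} {G : SimpleGraph V} {l : List V} (hl : PathList G l)
    (hmax : ∀ l', PathList G l' → l'.length ≤ l.length) {t : ℕ} (ht : 2 * t + 2 ≤ l.length)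
    (U : Finset V) (hU : ∀ u ∈ U, u ∉ l) {r : V} (hr : r ∉ l) (hrU : r ∉ U) (hcard : t ≤ U.card) :
    ∃ l', PathList Gᶜ (l[0] :: r :: l') ∧ l'.length = 2 * t + 1 ∧ ∀ x ∈ l', x ∈ U ∨ x ∈ l := by
  classical
  have hn := hl.1
  have hne : ∀ {u x : V}, u ∉ l → x ∈ l → u ≠ x := fun hu hx h => hu (h ▸ hx)
  have hlast : ∀ u, u ∉ l → Gᶜ.Adj u (l[l.length - 1]) := fun u hu =>
    compl_adj_of (hne hu (by simp)) (longest_not_adj_last hl hmax hu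
      (by simp [List.getLast?_eq_getElem?]))
  have hhead : ∀ u, u ∉ l → Gᶜ.Adj u (l[0]) := fun u hu =>
    compl_adj_of (hne hu (by simp)) (longest_not_adj_head hl hmax hu
      (by simp [List.head?_eq_getElem?]))
  obtain ⟨l', h1, h2, h3⟩ := zig (H := Gᶜ) l.toFinset (fun x => (l.idxOf x + 1) / 2)
    (fun j => l.getD (2 * j - 1) r) (fun j => l.getD (2 * j) r) (l[l.length - 1])
    (by simp) (fun u hu => hlast u (by simpa using hu)) t (Finset.Icc 1 t) U r (by simp)
    (by
      rw [hn.idxOf_getElem, Finset.mem_Icc]; omega)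
    (by
      intro j hj
      rw [Finset.mem_Icc] at hj
      have e1 : l.getD (2 * j - 1) r = l[2 * j - 1] := List.getD_eq_getElem _ _ (by omega)
      have e2 : l.getD (2 * j) r = l[2 * j] := List.getD_eq_getElem _ _ (by omega)
      simp only [e1, e2]
      rw [hn.idxOf_getElem, hn.idxOf_getElem]
      refine ⟨by simp, by simp, by omega, by omega⟩)
    (by
      intro j hj u hu
      rw [Finset.mem_Icc] at hj
      have hu' : u ∉ l := by simpa using hu
      obtain ⟨i, rfl⟩ : ∃ i, j = i + 1 := ⟨j - 1, by omega⟩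
      have e1 : l.getD (2 * (i + 1) - 1) r = l[2 * i + 1] := List.getD_eq_getElem _ _ (by omega)
      have e2 : l.getD (2 * (i + 1)) r = l[2 * i + 1 + 1] := List.getD_eq_getElem _ _ (by omega)
      simp only [e1, e2]
      have := longest_not_adj_consec hl hmax hu' (i := 2 * i + 1) (by omega)
      by_cases hh : G.Adj u l[2 * i + 1]
      · exact Or.inr (compl_adj_of (hne hu' (by simp)) (fun h => this ⟨hh, h⟩))
      · exact Or.inl (compl_adj_of (hne hu' (by simp)) hh))
    (fun u hu => by simpa using hU u hu) (by simpa using hr) hrU hcard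
  refine ⟨l', PathList.cons h1 (hhead r hr).symm ?_, h2, ?_⟩
  · intro hmem
    rcases List.mem_cons.1 hmem with h | h
    · exact hr (h ▸ by simp)
    · rcases h3 _ h with h | h | h
      · exact hU _ h (by simp)
      · have := (hn.getElem_inj_iff).1 h
        omega
      · have := h.2
        simp only [hn.idxOf_getElem, Finset.mem_Icc] at this
        omega
  · intro x hx
    rcases h3 x hx with h | h | h
    · exact Or.inl h
    · right; rw [h]; simp
    · right; simpa using h.1

theorem exists_notMem_list {V : Type*} [Fintype V] {c : List V} (h : c.length < Fintype.card V) :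
    ∃ b, b ∉ c := by
  classical
  by_contra hcon
  push Not at hcon
  have : c.toFinset = Finset.univ := Finset.eq_univ_iff_forall.2 (by simpa using hcon)
  have h2 := List.toFinset_card_le c
  rw [this, Finset.card_univ] at h2
  omega

theorem case_cycle {V : Type*} [Fintype V] {G : SimpleGraph V} (hGc : Gᶜ.Connected) {l : List V}
    (hl : PathList G l) (hmax : ∀ l', PathList G l' → l'.length ≤ l.length)
    (hlt : l.length < Fintype.card V) (hlt2 : Fintype.card V ≤ l.length + 2)
    {r w y : V} {L M : List V} (hr : r ∉ l) (hL : L ≠ []) (hM : M ≠ [])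
    (hleq : l = L ++ w :: y :: M) (hwr : G.Adj w r) :
    ∃ l', PathList Gᶜ l' ∧ Fintype.card V + 4 ≤ l.length + l'.length := by
  obtain ⟨x, L', rfl⟩ := List.exists_cons_of_ne_nil hL
  obtain ⟨M', z, rfl⟩ : ∃ M' z, M = M' ++ [z] :=
    ⟨M.dropLast, M.getLast hM, (List.dropLast_append_getLast hM).symm⟩
  have hx : x ∈ l.head? := by rw [hleq]; simp
  have hz : z ∈ l.getLast? := by rw [hleq]; simp [List.getLast?_append, List.getLast?_cons]
  have hne : ∀ {u x : V}, u ∉ l → x ∈ l → u ≠ x := fun hu hx h => hu (h ▸ hx)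
  have xl : x ∈ l := by rw [hleq]; simp
  have yl : y ∈ l := by rw [hleq]; simp
  have zl : z ∈ l := by rw [hleq]; simp
  have hn := hl.1
  have hch := hl.2
  have hrn : (r :: l).Nodup := List.nodup_cons.2 ⟨hr, hn⟩
  have dx : ∀ u, u ∉ l → Gᶜ.Adj u x := fun u hu =>
    compl_adj_of (hne hu xl) (longest_not_adj_head hl hmax hu hx)
  have dz : ∀ u, u ∉ l → Gᶜ.Adj u z := fun u hu =>
    compl_adj_of (hne hu zl) (longest_not_adj_last hl hmax hu hz)
  have hlen : l.length = L'.length + M'.length + 4 := by rw [hleq]; simp; omega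
  have nyx : y ≠ x ∧ y ≠ z ∧ x ≠ z := by
    rw [hleq] at hn
    simp only [List.cons_append, List.nodup_cons, List.mem_append, List.mem_cons,
      List.nodup_append] at hn
    grind
  have hch' := hch
  rw [hleq, List.isChain_append] at hch'
  obtain ⟨c1, c2, c3⟩ := hch'
  have c4 : (y :: (M' ++ [z])).IsChain G.Adj := (List.isChain_cons_cons.1 c2).2
  have wlast : ∀ v ∈ (x :: L').getLast?, G.Adj v w := fun v hv => c3 v hv w (by simp)
  have revc : (w :: (x :: L').reverse).IsChain G.Adj := by
    rw [List.isChain_cons]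
    refine ⟨fun v hv => (wlast v (by rwa [List.head?_reverse] at hv)).symm, ?_⟩
    exact List.isChain_reverse.2 (c1.imp fun _ _ h => h.symm)
  have dyr : Gᶜ.Adj r y := by
    refine compl_adj_of (hne hr yl) fun h => ?_
    have hi : (x :: L').length + 1 < l.length := by rw [hlen]; simp; omega
    refine longest_not_adj_consec hl hmax hr (i := (x :: L').length) hi ⟨?_, ?_⟩
    · have : l[(x :: L').length] = w := by
        simp only [hleq]; rw [List.getElem_append_right (by simp)]; simp
      rw [this]; exact hwr.symm
    · have : l[(x :: L').length + 1] = y := by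
        simp only [hleq]; rw [List.getElem_append_right (by simp)]; simp
      rw [this]; exact h
  have dyx : Gᶜ.Adj y x := by
    refine compl_adj_of nyx.1 fun h => ?_
    have hp : PathList G (r :: ((w :: (x :: L').reverse) ++ (y :: (M' ++ [z])))) := by
      constructor
      · refine (List.Perm.nodup_iff (List.Perm.cons r ?_)).1 hrn
        rw [hleq]
        refine List.perm_middle.trans ?_
        exact List.Perm.cons w (List.Perm.append_right (y :: (M' ++ [z]))
          (List.reverse_perm (x :: L')).symm)
      · rw [List.isChain_cons]
        refine ⟨?_, ?_⟩
        · intro v hv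
          simp at hv; subst hv; exact hwr.symm
        · rw [List.isChain_append]
          refine ⟨revc, c4, ?_⟩
          intro u hu v hv
          simp [List.getLast?_cons] at hu hv
          subst hu; subst hv
          exact h.symm
    have := hmax _ hp
    rw [hlen] at this
    simp at this
    omega
  have dxz : Gᶜ.Adj x z := by
    refine compl_adj_of nyx.2.2 fun h => ?_
    have hp : PathList G (r :: ((w :: y :: (M' ++ [z])) ++ (x :: L'))) := by
      constructor
      · refine (List.Perm.nodup_iff (List.Perm.cons r ?_)).1 hrn
        rw [hleq]
        exact List.perm_append_comm
      · rw [List.isChain_cons]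
        refine ⟨?_, ?_⟩
        · intro v hv
          simp at hv; subst hv; exact hwr.symm
        · rw [List.isChain_append]
          refine ⟨c2, c1, ?_⟩
          intro u hu v hv
          simp [List.getLast?_append, List.getLast?_cons] at hu hv
          subst hu; subst hv
          exact h.symm
    have := hmax _ hp
    rw [hlen] at this
    simp at this
    omega
  have hrx := hne hr xl
  have hry := hne hr yl
  have hrz := hne hr zl
  obtain ⟨n1, n2, n3⟩ := nyx
  rcases Nat.lt_or_ge (l.length + 1) (Fintype.card V) with hm | hm
  · obtain ⟨s, hs⟩ := exists_notMem_list (c := r :: l) (by simpa using hm)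
    have hsr : s ≠ r := fun h => hs (by simp [h])
    have hsl : s ∉ l := fun h => hs (by simp [h])
    have hsx := hne hsl xl
    have hsy := hne hsl yl
    have hsz := hne hsl zl
    have hc : PathList Gᶜ [r, y, x, s, z] := by
      constructor
      · simp only [List.nodup_cons, List.mem_cons, List.not_mem_nil, List.nodup_nil]
        grind
      · simp only [List.isChain_cons_cons, List.isChain_singleton]
        exact ⟨dyr, dyx, (dx s hsl).symm, dz s hsl, trivial⟩
    obtain ⟨b, hb⟩ := exists_notMem_list (c := [r, y, x, s, z]) (by simp; omega)
    obtain ⟨l', h1, h2⟩ := cycle_extend hGc hc (by simpa using (dz r hr).symm) (by simp) hb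
    exact ⟨l', h1, by rw [h2]; simp; omega⟩
  · have hc : PathList Gᶜ [r, y, x, z] := by
      constructor
      · simp only [List.nodup_cons, List.mem_cons, List.not_mem_nil, List.nodup_nil]
        grind
      · simp only [List.isChain_cons_cons, List.isChain_singleton]
        exact ⟨dyr, dyx, dxz, trivial⟩
    obtain ⟨b, hb⟩ := exists_notMem_list (c := [r, y, x, z]) (by simp; omega)
    obtain ⟨l', h1, h2⟩ := cycle_extend hGc hc (by simpa using (dz r hr).symm) (by simp) hb
    exact ⟨l', h1, by rw [h2]; simp; omega⟩

theorem main_comb {V : Type*} [Fintype V] {G : SimpleGraph V} (hG : G.Connected)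
    (hGc : Gᶜ.Connected) {l : List V} (hl : PathList G l) (hl0 : l ≠ [])
    (hmax : ∀ l', PathList G l' → l'.length ≤ l.length)
    (hmaxc : ∀ l', PathList Gᶜ l' → l'.length ≤ l.length)
    (hlt : l.length < Fintype.card V) :
    ∃ l', PathList Gᶜ l' ∧ Fintype.card V + 4 ≤ l.length + l'.length := by
  classical
  obtain ⟨b, hb⟩ := exists_notMem_list hlt
  obtain ⟨a, ha⟩ := List.exists_mem_of_ne_nil l hl0
  obtain ⟨w, hw, r, hr, hwr⟩ := exists_boundary hG {x | x ∈ l} ha hb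
  change w ∈ l at hw
  change ¬ (r ∈ l) at hr
  have hp2 : 2 ≤ l.length := by
    have := hmax [w, r] (PathList.cons ⟨by simp, by simp⟩ hwr (by simpa using hwr.ne))
    simpa using this
  rcases Nat.lt_or_ge (l.length + 2) (Fintype.card V) with hm | hm
  · set R : Finset V := Finset.univ \ l.toFinset with hR
    have hRl : ∀ u, u ∈ R ↔ u ∉ l := by intro u; simp [hR]
    have hRc : R.card + l.length = Fintype.card V := by
      rw [hR, ← Finset.card_univ, ← List.toFinset_card_of_nodup hl.1]
      exact Finset.card_sdiff_add_card_eq_card (Finset.subset_univ _)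
    have hrR : r ∈ R := (hRl r).2 hr
    have hc1 : (R.erase r).card = R.card - 1 := Finset.card_erase_of_mem hrR
    rcases Nat.lt_or_ge l.length (2 * R.card) with h | h
    · exfalso
      obtain ⟨s, hs⟩ : (R.erase r).Nonempty := Finset.card_pos.1 (by omega)
      have hsl : s ∉ l := (hRl s).1 (Finset.mem_of_mem_erase hs)
      have hc2 : ((R.erase r).erase s).card = (R.erase r).card - 1 := Finset.card_erase_of_mem hs
      obtain ⟨l', h1, h2, h3⟩ := big_zig hl hmax (t := (l.length - 2) / 2) (by omega)
        ((R.erase r).erase s)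
        (fun u hu => (hRl u).1 (Finset.mem_of_mem_erase (Finset.mem_of_mem_erase hu))) hr
        (by simp) (by omega)
      have hp : PathList Gᶜ (s :: l[0] :: r :: l') := by
        refine PathList.cons h1 (compl_adj_of (fun h => hsl (h ▸ by simp))
          (longest_not_adj_head hl hmax hsl (by simp [List.head?_eq_getElem?]))) ?_
        intro hmem
        simp only [List.mem_cons] at hmem
        rcases hmem with h | h | h
        · exact hsl (h ▸ by simp)
        · simp [h] at hs
        · rcases h3 s h with h | h
          · simp at h
          · exact hsl h
      have := hmaxc _ hp
      simp [h2] at this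
      omega
    · obtain ⟨l', h1, h2, h3⟩ := big_zig hl hmax (t := R.card - 1) (by omega)
        (R.erase r) (fun u hu => (hRl u).1 (Finset.mem_of_mem_erase hu)) hr
        (by simp) (by omega)
      refine ⟨_, h1, ?_⟩
      simp [h2]
      omega
  · obtain ⟨L, M, hleq⟩ := List.append_of_mem hw
    have hL : L ≠ [] := by
      rintro rfl
      exact longest_not_adj_head hl hmax hr (x := w) (by simp [hleq]) hwr.symm
    have hM : M ≠ [] := by
      rintro rfl
      exact longest_not_adj_last hl hmax hr (x := w) (by simp [hleq]) hwr.symm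
    obtain ⟨y, M', rfl⟩ := List.exists_cons_of_ne_nil hM
    by_cases hM' : M' = []
    · subst hM'
      obtain ⟨L', x, rfl⟩ : ∃ L' x, L = L' ++ [x] :=
        ⟨L.dropLast, L.getLast hL, (List.dropLast_append_getLast hL).symm⟩
      by_cases hL' : L' = []
      · subst hL'
        exfalso
        simp only [List.nil_append, List.cons_append] at hleq
        obtain ⟨w', hw', v, hv, hwv⟩ := exists_boundary hGc {w} (a := w) (b := r) rfl
          (fun h => hwr.ne (h : r = w).symm)
        have : w' = w := hw'
        subst this
        have hch := hl.2
        rw [hleq] at hch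
        simp only [List.isChain_cons_cons, List.isChain_singleton, and_true] at hch
        rw [SimpleGraph.compl_adj] at hwv
        have hvr : v ≠ r := fun h => hwv.2 (h ▸ hwr)
        have hvx : v ≠ x := fun h => hwv.2 (h ▸ hch.1.symm)
        have hvy : v ≠ y := fun h => hwv.2 (h ▸ hch.2)
        have hvl : v ∉ l := by rw [hleq]; simp; exact ⟨hvx, hwv.1.symm, hvy⟩
        have hrl := hr
        rw [hleq] at hrl
        simp only [List.mem_cons, List.not_mem_nil, or_false, not_or] at hrl
        have hn := hl.1
        rw [hleq] at hn
        have ex : ∀ u, u ∉ l → u ≠ x → Gᶜ.Adj u x := fun u hu hne =>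
          compl_adj_of hne (longest_not_adj_head hl hmax hu (by simp [hleq]))
        have ey : ∀ u, u ∉ l → u ≠ y → Gᶜ.Adj u y := fun u hu hne =>
          compl_adj_of hne (longest_not_adj_last hl hmax hu (by simp [hleq]))
        have hp : PathList Gᶜ [r, x, v, y] := by
          constructor
          · simp only [List.nodup_cons, List.mem_cons, List.not_mem_nil, List.nodup_nil] at hn ⊢
            grind
          · simp only [List.isChain_cons_cons, List.isChain_singleton]
            exact ⟨ex r hr hrl.1, (ex v hvl hvx).symm, ey v hvl hvy, trivial⟩
        have := hmaxc _ hp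
        rw [hleq] at this
        simp at this
      · have := case_cycle hGc (l := l.reverse) (r := r) (w := w) (y := x) (L := [y])
          (M := L'.reverse) hl.reverse (by simpa using hmax) (by simpa using hlt)
          (by simpa using hm) (by simpa using hr) (by simp) (by simpa using hL')
          (by rw [hleq]; simp) hwr
        simpa using this
    · exact case_cycle hGc hl hmax hlt hm hr hL hM' hleq hwr

theorem exists_longest {V : Type*} [Fintype V] (H : SimpleGraph V) (hH : H.Connected) :
    ∃ l, PathList H l ∧ l ≠ [] ∧ ∀ l', PathList H l' → l'.length ≤ l.length := by
  classical
  obtain ⟨v⟩ := hH.nonempty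
  let P : ℕ → Prop := fun k => ∃ l, PathList H l ∧ l.length = k
  have h1 : P 1 := ⟨[v], ⟨by simp, by simp⟩, by simp⟩
  have hb : ∀ {k}, P k → k ≤ Fintype.card V := by
    rintro k ⟨l, h, rfl⟩; exact h.length_le
  obtain ⟨l, hl, hlen⟩ : P (Nat.findGreatest P (Fintype.card V)) :=
    Nat.findGreatest_spec (hb h1) h1
  have hg : ∀ l', PathList H l' → l'.length ≤ l.length := by
    intro l' h'
    rw [hlen]
    exact Nat.le_findGreatest h'.length_le ⟨l', h', rfl⟩
  refine ⟨l, hl, ?_, hg⟩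
  rintro rfl
  obtain ⟨l1, h2, h3⟩ := h1
  have := hg l1 h2
  simp [h3] at this

theorem pc_aux {V : Type*} [Fintype V] (G : SimpleGraph V)
    (hG : G.Connected) (hGc : Gᶜ.Connected) {l : List V} (hl : PathList G l) (hl0 : l ≠ [])
    (hmax : ∀ l', PathList G l' → l'.length ≤ l.length)
    (hmaxc : ∀ l', PathList Gᶜ l' → l'.length ≤ l.length) :
    G.pc 2 + Gᶜ.pc 2 ≤ Fintype.card V + 2 := by
  have h1 := hl.pc_le hG hl0
  rcases Nat.lt_or_ge l.length (Fintype.card V) with hlt | hge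
  · obtain ⟨l', h2, h3⟩ := main_comb hG hGc hl hl0 hmax hmaxc hlt
    have h4 := h2.pc_le hGc (by rintro rfl; simp at h3; omega)
    omega
  · have := pc_le_sub_one hGc
    omega

theorem pc_main {V : Type*} [Fintype V] (G : SimpleGraph V)
    (hG : G.Connected) (hGc : Gᶜ.Connected) :
    G.pc 2 + Gᶜ.pc 2 ≤ Fintype.card V + 2 := by
  obtain ⟨l, h1, h2, h3⟩ := exists_longest G hG
  obtain ⟨l', h1', h2', h3'⟩ := exists_longest Gᶜ hGc
  rcases le_total l'.length l.length with h | h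
  · exact pc_aux G hG hGc h1 h2 h3 (fun k hk => (h3' k hk).trans h)
  · have := pc_aux Gᶜ hGc (by rwa [compl_compl]) h1' h2' h3'
      (fun k hk => (h3 k (by rwa [compl_compl] at hk)).trans h)
    rw [compl_compl] at this
    omega

/-- If `G` and its complement are both connected graphs on `n` vertices, then
`pc_{1,2}(G) + pc_{1,2}(Ḡ) ≤ n + 2`. -/
theorem pc_add_pc_compl_le {V : Type*} [Fintype V] (G : SimpleGraph V)
    (hG : G.Connected) (hGc : Gᶜ.Connected) :
    G.pc 2 + Gᶜ.pc 2 ≤ Fintype.card V + 2 := by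
  exact pc_main G hG hGc
end

section
/- Let n₁, n₂ ≥ 1 and let G be the double star T(n₁,n₂). Then the complement Ḡ is connected and pc_{1,2}(Ḡ) = 3. -/
open SimpleGraph

/-- The double star `T(n₁, n₂)`: two adjacent centers, the first with `n₁` pendant
leaves and the second with `n₂` pendant leaves. -/
def doubleStar (n₁ n₂ : ℕ) : SimpleGraph (Fin 2 ⊕ (Fin n₁ ⊕ Fin n₂)) :=
  SimpleGraph.fromRel (fun a b =>
    (a = Sum.inl 0 ∧ b = Sum.inl 1) ∨
    (a = Sum.inl 0 ∧ ∃ i : Fin n₁, b = Sum.inr (Sum.inl i)) ∨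
    (a = Sum.inl 1 ∧ ∃ j : Fin n₂, b = Sum.inr (Sum.inr j)))

theorem ds_coloring (n₁ n₂ : ℕ) (h₁ : 1 ≤ n₁) (h₂ : 1 ≤ n₂) :
    ∃ c, (doubleStar n₁ n₂)ᶜ.IsPCColoring 2 3 c := by
  classical
  let G := (doubleStar n₁ n₂)ᶜ
  let c : Sym2 (Fin 2 ⊕ (Fin n₁ ⊕ Fin n₂)) → ℕ :=
    fun e => if Sum.inl 0 ∈ e then 0 else if Sum.inl 1 ∈ e then 2 else 1
  have one : ∀ {u v} (h : G.Adj u v), ∃ p : G.Walk u v, p.IsPath ∧ p.IsDistProper 2 c := by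
    intro u v h
    refine ⟨.cons h .nil, by simp [h.ne], ?_⟩
    intro i j hi hj hij _
    simp at hi hj
    omega
  have two : ∀ {u v w} (h : G.Adj u v) (h' : G.Adj v w), u ≠ w → c s(u, v) ≠ c s(v, w) →
      ∃ p : G.Walk u w, p.IsPath ∧ p.IsDistProper 2 c := by
    intro u v w h h' huw hc
    refine ⟨.cons h (.cons h' .nil), by simp [h.ne, h'.ne, huw], ?_⟩
    intro i j hi hj hij _
    simp at hi hj
    obtain rfl : i = 0 := by omega
    obtain rfl : j = 1 := by omega
    simpa using hc
  have three : ∀ {u v w x} (h : G.Adj u v) (h' : G.Adj v w) (h'' : G.Adj w x),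
      u ≠ w → u ≠ x → v ≠ x → c s(u, v) ≠ c s(v, w) → c s(u, v) ≠ c s(w, x) →
      c s(v, w) ≠ c s(w, x) →
      ∃ p : G.Walk u x, p.IsPath ∧ p.IsDistProper 2 c := by
    intro u v w x h h' h'' a1 a2 a3 b1 b2 b3
    refine ⟨.cons h (.cons h' (.cons h'' .nil)), by simp [h.ne, h'.ne, h''.ne, a1, a2, a3], ?_⟩
    intro i j hi hj hij _
    simp at hi hj
    have : (i = 0 ∧ j = 1) ∨ (i = 0 ∧ j = 2) ∨ (i = 1 ∧ j = 2) := by omega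
    rcases this with ⟨rfl, rfl⟩ | ⟨rfl, rfl⟩ | ⟨rfl, rfl⟩
    · simpa using b1
    · simpa using b2
    · simpa using b3
  have hub : ∀ b, G.Adj (.inl 0) (.inr (.inr b)) := by intro b; simp [G, doubleStar]
  have hbu : ∀ b, G.Adj (.inr (.inr b)) (.inl 0) := fun b => (hub b).symm
  have hva : ∀ a, G.Adj (.inl 1) (.inr (.inl a)) := by intro b; simp [G, doubleStar]
  have hav : ∀ a, G.Adj (.inr (.inl a)) (.inl 1) := fun b => (hva b).symm
  have hl : ∀ x y, x ≠ y → G.Adj (.inr x) (.inr y) := by intro x y h; simp [G, doubleStar, h]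
  let a : Fin n₁ := ⟨0, h₁⟩
  let b : Fin n₂ := ⟨0, h₂⟩
  refine ⟨c, ?_, ?_⟩
  · intro e _
    simp only [c]
    split_ifs <;> omega
  · rintro (u | x | x) (v | y | y) huv
    · fin_cases u <;> fin_cases v
      · simp at huv
      · exact three (hub b) (hl (.inr b) (.inl a) (by simp)) (hav a) (by simp) (by simp) (by simp)
          (by simp [c]) (by simp [c]) (by simp [c])
      · exact three (hva a) (hl (.inl a) (.inr b) (by simp)) (hbu b) (by simp) (by simp) (by simp)
          (by simp [c]) (by simp [c]) (by simp [c])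
      · simp at huv
    · fin_cases u
      · exact two (hub b) (hl (.inr b) (.inl y) (by simp)) (by simp) (by simp [c])
      · exact one (hva y)
    · fin_cases u
      · exact one (hub y)
      · exact two (hva a) (hl (.inl a) (.inr y) (by simp)) (by simp) (by simp [c])
    · fin_cases v
      · exact two (hl (.inl x) (.inr b) (by simp)) (hbu b) (by simp) (by simp [c])
      · exact one (hav x)
    · exact one (hl _ _ (by simpa using huv))
    · exact one (hl _ _ (by simp))
    · fin_cases v
      · exact one (hbu x)
      · exact two (hl (.inr x) (.inl a) (by simp)) (hav a) (by simp) (by simp [c])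
    · exact one (hl _ _ (by simp))
    · exact one (hl _ _ (by simpa using huv))

theorem ds_lower (n₁ n₂ k : ℕ) (c) (h : (doubleStar n₁ n₂)ᶜ.IsPCColoring 2 k c) : 3 ≤ k := by
  obtain ⟨hk, hp⟩ := h
  obtain ⟨p, -, hp⟩ := hp (.inl 0) (.inl 1) (by simp)
  match p, hp with
  | .cons h .nil, _ => simp [doubleStar] at h
  | .cons (v := w) h (.cons h' .nil), _ =>
    rcases w with w | w | w
    · fin_cases w <;> simp [doubleStar] at h h'
    · simp [doubleStar] at h
    · simp [doubleStar] at h'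
  | .cons h (.cons h' (.cons h'' q)), hp =>
    have e1 := hk _ ((SimpleGraph.mem_edgeSet _).2 h)
    have e2 := hk _ ((SimpleGraph.mem_edgeSet _).2 h')
    have e3 := hk _ ((SimpleGraph.mem_edgeSet _).2 h'')
    have d1 := hp 0 1 (by simp) (by simp) (by simp) (by simp)
    have d2 := hp 0 2 (by simp) (by simp) (by simp) (by simp)
    have d3 := hp 1 2 (by simp) (by simp) (by simp) (by simp)
    simp at d1 d2 d3
    omega

/-- For `n₁, n₂ ≥ 1`, the complement of the double star `T(n₁,n₂)` is connected and
has `(1,2)`-proper connection number `3`. -/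
theorem pc_compl_doubleStar (n₁ n₂ : ℕ) (h₁ : 1 ≤ n₁) (h₂ : 1 ≤ n₂) :
    (doubleStar n₁ n₂)ᶜ.Connected ∧ (doubleStar n₁ n₂)ᶜ.pc 2 = 3 := by
  obtain ⟨c, hc⟩ := ds_coloring n₁ n₂ h₁ h₂
  refine ⟨⟨?_⟩, ?_⟩
  · intro u v
    by_cases h : u = v
    · subst h; exact .rfl
    · obtain ⟨p, -⟩ := hc.2 u v h
      exact ⟨p⟩
  · apply le_antisymm
    · exact Nat.sInf_le ⟨c, hc⟩
    · refine le_csInf ⟨3, c, hc⟩ ?_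
      rintro k ⟨c, hc⟩
      exact ds_lower n₁ n₂ k c hc
end

section
/- Let G be a graph on n vertices such that both G and its complement Ḡ are connected, and suppose G has a cut vertex u such that G − u has at least three connected components. Then pc_{1,2}(Ḡ) ≤ 4. -/
open SimpleGraph

theorem distProper_of_nodup {V : Type*} {G : SimpleGraph V} {u v : V}
    (ℓ : ℕ) (c : Sym2 V → ℕ) (p : G.Walk u v) (h : (p.edges.map c).Nodup) :
    p.IsDistProper ℓ c := by
  intro i j hi hj hij _ heq
  have := (List.Nodup.getElem_inj_iff h (i := i) (j := j)
    (hi := by simpa using hi) (hj := by simpa using hj)).1 (by simpa using heq)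
  omega

/-- color of an edge, from the parts of its ends -/
def partColor {V : Type*} (p : V → ℕ) : Sym2 V → ℕ :=
  Sym2.lift ⟨fun a b => min (p a + p b - 1) 3, fun a b => by simp only [add_comm]⟩

theorem pc_aux_s14 {V : Type*} (H : SimpleGraph V) (u w b c : V) (p : V → ℕ)
    (hu : p u = 4) (hp : ∀ v, v ≠ u → p v ≤ 2)
    (hadj : ∀ x y, x ≠ u → y ≠ u → p x ≠ p y → H.Adj x y)
    (huw : H.Adj u w) (hw : p w = 0) (hb : p b = 1) (hc : p c = 2) :
    H.IsPCColoring 2 4 (partColor p) := by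
  have hwu : w ≠ u := huw.ne'
  have hbu : b ≠ u := by rintro rfl; omega
  have hcu : c ≠ u := by rintro rfl; omega
  have hne : ∀ x y, p x ≠ p y → x ≠ y := by rintro x y h rfl; exact h rfl
  have key : ∀ x y z t, x ≠ u → y ≠ u → z ≠ u → t ≠ u → x ≠ t → p x = p t →
      p x ≠ p y → p x ≠ p z → p y ≠ p z →
      ∃ q : H.Walk x t, q.IsPath ∧ (q.edges.map (partColor p)).Nodup := by
    intro x y z t hx hy hz ht hxt h1 h2 h3 h4
    have := hp x hx
    have := hp y hy
    have := hp z hz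
    have a1 := hadj x y hx hy h2
    have a2 := hadj y z hy hz h4
    have a3 := hadj z t hz ht (by omega)
    refine ⟨.cons a1 (.cons a2 (.cons a3 .nil)), ?_, ?_⟩
    · have := hne x z h3
      have := hne y t (by omega)
      simp [a1.ne, a2.ne, a3.ne, *]
    · simp [partColor]
      omega
  have keyu : ∀ t, t ≠ u →
      ∃ q : H.Walk u t, q.IsPath ∧ (q.edges.map (partColor p)).Nodup := by
    intro t ht
    have h2 := hp t ht
    by_cases htw : t = w
    · subst htw
      exact ⟨.cons huw .nil, by simp [huw.ne], by simp⟩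
    by_cases h0 : p t = 0
    · have a1 := hadj w b hwu hbu (by omega)
      have a2 := hadj b c hbu hcu (by omega)
      have a3 := hadj c t hcu ht (by omega)
      refine ⟨.cons huw (.cons a1 (.cons a2 (.cons a3 .nil))), ?_, ?_⟩
      · have := hne w c (by omega)
        have := hne b t (by omega)
        simp [a1.ne, a2.ne, a3.ne, hwu.symm, hbu.symm, hcu.symm, ht.symm, Ne.symm htw, *]
      · simp [partColor, hu, hw, hb, hc, h0]
    · have a1 := hadj w t hwu ht (by omega)
      refine ⟨.cons huw (.cons a1 .nil), ?_, ?_⟩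
      · simp [a1.ne, hwu.symm, ht.symm]
      · simp [partColor, hu, hw]
        omega
  constructor
  · intro e _
    induction e using Sym2.ind with
    | _ x y => simp [partColor]
  · intro x t hxt
    suffices h : ∃ q : H.Walk x t, q.IsPath ∧ (q.edges.map (partColor p)).Nodup by
      obtain ⟨q, h1, h2⟩ := h
      exact ⟨q, h1, distProper_of_nodup _ _ _ h2⟩
    by_cases hx : x = u
    · subst hx
      exact keyu t hxt.symm
    by_cases ht : t = u
    · subst ht
      obtain ⟨q, h1, h2⟩ := keyu x hx
      exact ⟨q.reverse, h1.reverse, by simpa [Walk.edges_reverse, List.map_reverse] using h2⟩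
    by_cases h : p x = p t
    · have := hp x hx
      have h3 : p x = 0 ∨ p x = 1 ∨ p x = 2 := by omega
      rcases h3 with h3 | h3 | h3
      · exact key x b c t hx hbu hcu ht hxt h (by omega) (by omega) (by omega)
      · exact key x w c t hx hwu hcu ht hxt h (by omega) (by omega) (by omega)
      · exact key x w b t hx hwu hbu ht hxt h (by omega) (by omega) (by omega)
    · exact ⟨.cons (hadj x t hx ht h) .nil, by simp [hxt], by simp⟩

/-- If `G` and its complement are both connected and `G` has a cut vertex `u` such
that `G - u` has at least three connected components, then `pc_{1,2}(Ḡ) ≤ 4`. -/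
theorem pc_compl_le_four_of_three_components {V : Type*} [Fintype V]
    (G : SimpleGraph V) (hG : G.Connected) (hGc : Gᶜ.Connected) (u : V)
    (hcut : 3 ≤ Nat.card ((G.induce ({u}ᶜ : Set V)).ConnectedComponent)) :
    Gᶜ.pc 2 ≤ 4 := by
  classical
  set K := (G.induce ({u}ᶜ : Set V)).ConnectedComponent with hK
  have : Finite K := Quot.finite _
  have : Fintype K := Fintype.ofFinite K
  rw [Nat.card_eq_fintype_card] at hcut
  have hex : ∃ v : V, v ≠ u := by
    have : 0 < Fintype.card K := by omega
    obtain ⟨k⟩ := Fintype.card_pos_iff.1 this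
    obtain ⟨⟨v, hv⟩, -⟩ := k.exists_rep
    exact ⟨v, hv⟩
  obtain ⟨v, hv⟩ := hex
  have : Nontrivial V := ⟨v, u, hv⟩
  obtain ⟨w, huw⟩ := hGc.preconnected.exists_adj_of_nontrivial u
  let m : ∀ x : V, x ≠ u → K := fun x hx => (G.induce ({u}ᶜ : Set V)).connectedComponentMk ⟨x, hx⟩
  have hm : ∀ k : K, ∃ x, ∃ hx : x ≠ u, m x hx = k := by
    intro k
    obtain ⟨⟨x, hx⟩, h⟩ := k.exists_rep
    exact ⟨x, hx, h⟩
  obtain ⟨k1, h1⟩ := Finset.exists_mem_notMem_of_card_lt_card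
    (s := {m w huw.ne'}) (t := (Finset.univ : Finset K)) (by simp; omega)
  obtain ⟨k2, h2⟩ := Finset.exists_mem_notMem_of_card_lt_card
    (s := {m w huw.ne', k1}) (t := (Finset.univ : Finset K))
    (by rw [Finset.card_univ]; exact lt_of_le_of_lt Finset.card_le_two hcut)
  simp at h1 h2
  obtain ⟨b, hbu, hb⟩ := hm k1
  obtain ⟨c, hcu, hc⟩ := hm k2
  let p : V → ℕ := fun x => if hx : x = u then 4 else
    if m x hx = k1 then 1 else if m x hx = k2 then 2 else 0
  apply Nat.sInf_le
  refine ⟨partColor p, pc_aux_s14 _ u w b c p (by simp [p]) ?_ ?_ huw ?_ ?_ ?_⟩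
  · intro x hx
    simp only [p, dif_neg hx]
    split_ifs <;> omega
  · intro x y hx hy hxy
    rw [compl_adj]
    refine ⟨by rintro rfl; exact hxy rfl, fun h => hxy ?_⟩
    have : m x hx = m y hy := by
      apply ConnectedComponent.sound
      exact Adj.reachable (by simpa using h)
    simp only [p, dif_neg hx, dif_neg hy, this]
  · simp only [p, dif_neg huw.ne']
    rw [if_neg (fun h => h1 h.symm), if_neg (fun h => h2.1 h.symm)]
  · simp only [p, dif_neg hbu]
    rw [if_pos hb]
  · simp only [p, dif_neg hcu]
    rw [if_neg (by rw [hc]; exact h2.2), if_pos hc]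
end

section
/- Let G be a graph on n vertices such that both G and its complement Ḡ are connected, and suppose G has a cut vertex u such that G − u has exactly two connected components, each with at least 2 vertices. Then pc_{1,2}(Ḡ) ≤ 4. -/
open SimpleGraph

def PCcol (i j : ℕ) : ℕ :=
  if (i = 1 ∧ j = 4) ∨ (i = 4 ∧ j = 1) then 1
  else if (i = 2 ∧ j = 4) ∨ (i = 4 ∧ j = 2) then 2
  else if (i = 2 ∧ j = 3) ∨ (i = 3 ∧ j = 2) then 3 else 0

theorem PCcol_symm (i j : ℕ) : PCcol i j = PCcol j i := by
  unfold PCcol; grind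

theorem PCcol_lt (i j : ℕ) : PCcol i j < 4 := by
  unfold PCcol; grind

def PCc {V : Type*} (t : V → ℕ) : Sym2 V → ℕ :=
  Sym2.lift ⟨fun v w => PCcol (t v) (t w), fun _ _ => PCcol_symm _ _⟩

theorem PCc_mk {V : Type*} (t : V → ℕ) (v w : V) : PCc t s(v, w) = PCcol (t v) (t w) := rfl

def PCR {V : Type*} (H : SimpleGraph V) (c : Sym2 V → ℕ) (v w : V) : Prop :=
  ∃ p : H.Walk v w, p.IsPath ∧ p.IsDistProper 2 c

theorem PCR.symm {V : Type*} {H : SimpleGraph V} {c : Sym2 V → ℕ} {v w : V}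
    (h : PCR H c v w) : PCR H c w v := by
  obtain ⟨p, hp, hd⟩ := h
  refine ⟨p.reverse, hp.reverse, ?_⟩
  intro i j hi hj hij hj2
  have hl : p.reverse.edges.length = p.edges.length := by simp
  have := hd (p.edges.length - 1 - j) (p.edges.length - 1 - i) (by omega) (by omega)
    (by omega) (by omega)
  simp only [Walk.edges_reverse, List.getElem_reverse]
  exact this.symm

theorem PCR.one {V : Type*} {H : SimpleGraph V} {c : Sym2 V → ℕ} {a b : V}
    (h : H.Adj a b) : PCR H c a b := by
  refine ⟨.cons h .nil, by simp [h.ne], ?_⟩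
  intro i j hi hj hij hj2
  simp at hi hj
  omega

theorem PCR.two {V : Type*} {H : SimpleGraph V} {c : Sym2 V → ℕ} {a b d : V}
    (h : H.Adj a b) (h' : H.Adj b d) (n : a ≠ d) (h1 : c s(a, b) ≠ c s(b, d)) :
    PCR H c a d := by
  refine ⟨.cons h (.cons h' .nil), by simp [h.ne, h'.ne, n], ?_⟩
  intro i j hi hj hij hj2
  simp at hi hj
  obtain rfl : i = 0 := by omega
  obtain rfl : j = 1 := by omega
  simpa using h1

theorem PCR.three {V : Type*} {H : SimpleGraph V} {c : Sym2 V → ℕ} {a b d e : V}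
    (h : H.Adj a b) (h' : H.Adj b d) (h'' : H.Adj d e) (n : a ≠ d) (n' : a ≠ e) (n'' : b ≠ e)
    (h1 : c s(a, b) ≠ c s(b, d)) (h2 : c s(a, b) ≠ c s(d, e)) (h3 : c s(b, d) ≠ c s(d, e)) :
    PCR H c a e := by
  refine ⟨.cons h (.cons h' (.cons h'' .nil)), by simp [h.ne, h'.ne, h''.ne, n, n', n''], ?_⟩
  intro i j hi hj hij hj2
  simp at hi hj
  interval_cases j <;> interval_cases i <;> simp_all

theorem PCR.four {V : Type*} {H : SimpleGraph V} {c : Sym2 V → ℕ} {a b d e f : V}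
    (h : H.Adj a b) (h' : H.Adj b d) (h'' : H.Adj d e) (h''' : H.Adj e f)
    (n1 : a ≠ d) (n2 : a ≠ e) (n3 : b ≠ e) (n4 : a ≠ f) (n5 : b ≠ f) (n6 : d ≠ f)
    (h1 : c s(a, b) ≠ c s(b, d)) (h2 : c s(a, b) ≠ c s(d, e)) (h3 : c s(b, d) ≠ c s(d, e))
    (h4 : c s(b, d) ≠ c s(e, f)) (h5 : c s(d, e) ≠ c s(e, f)) :
    PCR H c a f := by
  refine ⟨.cons h (.cons h' (.cons h'' (.cons h''' .nil))),
    by simp [h.ne, h'.ne, h''.ne, h'''.ne, n1, n2, n3, n4, n5, n6], ?_⟩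
  intro i j hi hj hij hj2
  simp at hi hj
  interval_cases j <;> interval_cases i <;> simp_all

theorem PC_main {V : Type*} (H : SimpleGraph V) (t : V → ℕ) (u x a p b : V)
    (hu : ∀ v, t v = 0 ↔ v = u) (hx : ∀ v, t v = 1 ↔ v = x) (hp : ∀ v, t v = 3 ↔ v = p)
    (ha : t a = 2) (hb : t b = 4) (ht : ∀ v, t v ≤ 4) (hux : H.Adj u x)
    (hadj : ∀ v w, 1 ≤ t v → t v ≤ 2 → 3 ≤ t w → H.Adj v w) :
    H.IsPCColoring 2 4 (PCc t) := by
  have tu : t u = 0 := (hu u).2 rfl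
  have tx : t x = 1 := (hx x).2 rfl
  have tp : t p = 3 := (hp p).2 rfl
  have ne : ∀ v w, t v ≠ t w → v ≠ w := fun v w h e => h (by rw [e])
  refine ⟨?_, ?_⟩
  · intro e _
    induction e using Sym2.ind with
    | _ v w => exact PCcol_lt _ _
  suffices ∀ v w, v ≠ w → t v ≤ t w → PCR H (PCc t) v w by
    intro v w hvw
    rcases le_total (t v) (t w) with h | h
    · exact this v w hvw h
    · exact (this w v hvw.symm h).symm
  intro v w hvw hle
  have hv := ht v
  have hw := ht w
  have hadj' : ∀ v w, 1 ≤ t v → t v ≤ 2 → 3 ≤ t w → H.Adj w v :=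
    fun v w h1 h2 h3 => (hadj v w h1 h2 h3).symm
  have htw : t w = 0 ∨ t w = 1 ∨ t w = 2 ∨ t w = 3 ∨ t w = 4 := by omega
  obtain h | h | h | h | h : t v = 0 ∨ t v = 1 ∨ t v = 2 ∨ t v = 3 ∨ t v = 4 := by omega
  all_goals rcases htw with h' | h' | h' | h' | h'
  all_goals first
    | (exfalso; omega)
    | (exfalso; exact hvw (((hu v).1 h).trans ((hu w).1 h').symm))
    | (exfalso; exact hvw (((hx v).1 h).trans ((hx w).1 h').symm))
    | (exfalso; exact hvw (((hp v).1 h).trans ((hp w).1 h').symm))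
    | exact PCR.one (hadj v w (by omega) (by omega) (by omega))
    | skip
  · obtain rfl := (hu v).1 h
    obtain rfl := (hx w).1 h'
    exact PCR.one hux
  · obtain rfl := (hu v).1 h
    apply PCR.three hux (hadj x b _ _ _) (hadj' w b _ _ _)
    all_goals first | omega | (apply ne; omega) | simp [PCc_mk, PCcol, *]
  · obtain rfl := (hu v).1 h
    apply PCR.four hux (hadj x b _ _ _) (hadj' a b _ _ _) (hadj a w _ _ _)
    all_goals first | omega | (apply ne; omega) | simp [PCc_mk, PCcol, *]
  · obtain rfl := (hu v).1 h
    apply PCR.two hux (hadj x w _ _ _)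
    all_goals first | omega | (apply ne; omega) | simp [PCc_mk, PCcol, *]
  · apply PCR.two (hadj v p _ _ _) (hadj' w p _ _ _)
    all_goals first | omega | (apply ne; omega) | simp [PCc_mk, PCcol, *]
  · apply PCR.four (hadj v p _ _ _) (hadj' x p _ _ _) (hadj x b _ _ _) (hadj' w b _ _ _)
    all_goals first | omega | exact hvw | (apply ne; omega) | simp [PCc_mk, PCcol, *]
  · apply PCR.two (hadj' x v _ _ _) (hadj x w _ _ _)
    all_goals first | omega | (apply ne; omega) | simp [PCc_mk, PCcol, *]
  · apply PCR.four (hadj' x v _ _ _) (hadj x p _ _ _) (hadj' a p _ _ _) (hadj a w _ _ _)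
    all_goals first | omega | exact hvw | (apply ne; omega) | simp [PCc_mk, PCcol, *]

theorem PC_two {V : Type*} [Fintype V] (s : Set V) (h : 2 ≤ Nat.card s) (x : V) :
    ∃ y ∈ s, y ≠ x := by
  by_contra hc
  push Not at hc
  have : s.Subsingleton := fun a ha b hb => (hc a ha).trans (hc b hb).symm
  have := Set.ncard_le_one_iff_subsingleton.2 this
  rw [← Nat.card_coe_set_eq] at this
  omega

/-- If `G` and its complement are both connected and `G` has a cut vertex `u` such
that `G - u` has exactly two connected components, each with at least two vertices,
then `pc_{1,2}(Ḡ) ≤ 4`. -/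
theorem pc_compl_le_four_of_two_large_components {V : Type*} [Fintype V]
    (G : SimpleGraph V) (hG : G.Connected) (hGc : Gᶜ.Connected) (u : V)
    (hcut : Nat.card ((G.induce ({u}ᶜ : Set V)).ConnectedComponent) = 2)
    (hlarge : ∀ C : (G.induce ({u}ᶜ : Set V)).ConnectedComponent,
      2 ≤ Nat.card C.supp) :
    Gᶜ.pc 2 ≤ 4 := by
  classical
  apply Nat.sInf_le
  -- a neighbour of u in the complement
  obtain ⟨C0, -⟩ : ∃ C : (G.induce ({u}ᶜ : Set V)).ConnectedComponent, True := by
    have : Nonempty (G.induce ({u}ᶜ : Set V)).ConnectedComponent :=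
      (Nat.card_pos_iff.1 (by omega)).1
    exact ⟨this.some, trivial⟩
  obtain ⟨z, hz⟩ := C0.exists_rep
  have : Nontrivial V := ⟨⟨u, z.1, fun h => z.2 h.symm⟩⟩
  obtain ⟨x, hux⟩ := hGc.preconnected.exists_adj_of_nontrivial u
  have hxu : x ≠ u := hux.ne'
  set K := G.induce ({u}ᶜ : Set V) with hK
  let C := K.connectedComponentMk ⟨x, hxu⟩
  obtain ⟨D, hD⟩ : ∃ D : K.ConnectedComponent, D ≠ C := by
    have : Nontrivial K.ConnectedComponent := by
      have : Finite K.ConnectedComponent := Nat.finite_of_card_ne_zero (by omega)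
      exact Finite.one_lt_card_iff_nontrivial.1 (by omega)
    exact exists_ne C
  have hCD : ∀ E : K.ConnectedComponent, E = C ∨ E = D := by
    intro E
    obtain ⟨P, Q, hPQ, hU⟩ := Nat.card_eq_two_iff.1 hcut
    have h1 : E ∈ ({P, Q} : Set _) := hU ▸ Set.mem_univ _
    have h2 : C ∈ ({P, Q} : Set _) := hU ▸ Set.mem_univ _
    have h3 : D ∈ ({P, Q} : Set _) := hU ▸ Set.mem_univ _
    simp only [Set.mem_insert_iff, Set.mem_singleton_iff] at h1 h2 h3
    grind
  obtain ⟨a, haC, hax⟩ := PC_two C.supp (hlarge C) ⟨x, hxu⟩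
  obtain ⟨p, hpD⟩ := D.exists_rep
  obtain ⟨b, hbD, hbp⟩ := PC_two D.supp (hlarge D) p
  have haC' : K.connectedComponentMk a = C := haC
  have hbD' : K.connectedComponentMk b = D := hbD
  have hpD' : K.connectedComponentMk p = D := hpD
  let t : V → ℕ := fun v =>
    if h : v = u then 0
    else if v = x then 1
    else if v = p then 3
    else if K.connectedComponentMk ⟨v, h⟩ = C then 2 else 4
  have hpx : p.1 ≠ x := by
    intro h
    have : p = ⟨x, hxu⟩ := Subtype.ext h
    rw [this] at hpD'
    exact hD hpD'.symm
  have hpu : p.1 ≠ u := p.2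
  have hau : a.1 ≠ u := a.2
  have hbu : b.1 ≠ u := b.2
  have hax' : a.1 ≠ x := fun h => hax (Subtype.ext h)
  have hbp' : b.1 ≠ p.1 := fun h => hbp (Subtype.ext h)
  have hap : a.1 ≠ p.1 := fun h => hD (by rw [← hpD', ← haC', Subtype.ext h])
  have hbx : b.1 ≠ x := by
    intro h
    have : b = ⟨x, hxu⟩ := Subtype.ext h
    rw [this] at hbD'
    exact hD hbD'.symm
  have key1 : ∀ v, 1 ≤ t v → t v ≤ 2 → ∃ h : v ≠ u, K.connectedComponentMk ⟨v, h⟩ = C := by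
    intro v h1 h2
    by_cases hv : v = u
    · simp [t, hv] at h1
    refine ⟨hv, ?_⟩
    by_cases hvx : v = x
    · subst hvx; rfl
    by_contra hne
    simp only [t, hv, hvx, hne, dite_false, if_false] at h2
    split_ifs at h2 <;> omega
  have key2 : ∀ v, 3 ≤ t v → ∃ h : v ≠ u, K.connectedComponentMk ⟨v, h⟩ = D := by
    intro v h1
    by_cases hv : v = u
    · simp [t, hv] at h1
    refine ⟨hv, ?_⟩
    by_cases hvp : v = p
    · subst hvp; exact hpD'
    rcases hCD (K.connectedComponentMk ⟨v, hv⟩) with h | h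
    · simp only [t, hv, hvp, h, dite_false, if_false, if_true] at h1
      split_ifs at h1 <;> omega
    · exact h
  refine ⟨PCc t, PC_main Gᶜ t u x a p b ?_ ?_ ?_ ?_ ?_ ?_ hux ?_⟩
  · intro v; simp only [t]; split_ifs <;> simp_all
  · intro v; simp only [t]; split_ifs <;> simp_all
    all_goals exact hxu.symm
  · intro v; simp only [t]; split_ifs <;> simp_all
    all_goals grind
  · have : ¬ a.1 = u := hau
    simp [t, this, hax', hap, haC']
  · have : ¬ b.1 = u := hbu
    simp [t, this, hbx, hbp', hbD', hD]
  · intro v; simp only [t]; split_ifs <;> omega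
  · intro v w h1 h2 h3
    obtain ⟨hv, hv'⟩ := key1 v h1 h2
    obtain ⟨hw, hw'⟩ := key2 w h3
    rw [SimpleGraph.compl_adj]
    refine ⟨?_, ?_⟩
    · rintro rfl
      exact hD (hw'.symm.trans hv')
    · intro hadj
      have : K.Adj ⟨v, hv⟩ ⟨w, hw⟩ := hadj
      have := SimpleGraph.ConnectedComponent.connectedComponentMk_eq_of_adj this
      exact hD (hw'.symm.trans (this.symm.trans hv'))
end
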